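/- Let G be a connected simple graph with maximum degree at most 3 that is not isomorphic to K2 (the complete graph on two vertices), such that the set of all vertices of degree 3 in G is an independent set. Then there exists a locally irregular 2-edge-coloring of ^2G, encoded by r : E(G) → {0,1,2}, with the additional property that for every edge uv of G with u of degree 1 and r(uv) = 1 (a red-blue colored pendant multiedge), it is not the case that the red degree of v equals 3 and the blue degree of v equals 3. -/

import Mathlib

open scoped Classical

/-- The red degree of a vertex `x`: the sum of the red multiplicities `r e`
over all edges `e` of `G` incident with `x`. -/
noncomputable def redDeg {V : Type*} [Fintype V] [DecidableEq V]
    (G : SimpleGraph V) (r : Sym2 V → ℕ) (x : V) : ℕ :=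
  ∑ e ∈ G.edgeFinset.filter (fun e => x ∈ e), r e

/-- The blue degree of a vertex `x`: the sum of `2 - r e` over all edges `e`
of `G` incident with `x`. -/
noncomputable def blueDeg {V : Type*} [Fintype V] [DecidableEq V]
    (G : SimpleGraph V) (r : Sym2 V → ℕ) (x : V) : ℕ :=
  ∑ e ∈ G.edgeFinset.filter (fun e => x ∈ e), (2 - r e)

/-- `r : E(G) → {0,1,2}` encodes a locally irregular 2-edge-coloring of `²G`:
every edge gets a red multiplicity at most 2, and for every edge `uv`, if
`r s(u,v) ≥ 1` the red degrees of `u` and `v` differ, and if `r s(u,v) ≤ 1`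
the blue degrees of `u` and `v` differ. -/
def IsLIR2 {V : Type*} [Fintype V] [DecidableEq V]
    (G : SimpleGraph V) (r : Sym2 V → ℕ) : Prop :=
  (∀ e ∈ G.edgeSet, r e ≤ 2) ∧
  ∀ u v : V, G.Adj u v →
    (1 ≤ r s(u, v) → redDeg G r u ≠ redDeg G r v) ∧
    (r s(u, v) ≤ 1 → blueDeg G r u ≠ blueDeg G r v)

/-- `lir(²G) ≤ 2`: there is a locally irregular 2-edge-coloring of `²G`. -/
def LIRtwoLE2 {V : Type*} [Fintype V] [DecidableEq V] (G : SimpleGraph V) : Prop :=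
  ∃ r : Sym2 V → ℕ, IsLIR2 G r

/-!
Write a colouring as a sign for every edge: `1` for two red copies, `-1` for two blue copies, `0`
for one copy of each. A vertex then has red degree `deg + excess` and blue degree `deg - excess`,
where the excess is the sum of the signs around it.

Give every vertex `u` a sign `τ u`, to be worn by all its edges if it has degree 3. Only threads,
the paths `u - x - y - v` with `x` and `y` of degree 2, obstruct this: the middle edge `xy` demands
that `ux` and `yv` have different colours, which fails if `τ u = τ v`. In that case the earlier of
the two end edges is muted, that is, coloured `0`. A maximum cut in the multigraph of threads makes
at most half of the threads at any vertex monochromatic, so at most one edge is muted at a vertex of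
degree 3. This keeps the excess there at `2 τ u` or `3 τ u`, beyond the reach of the neighbours.

The remaining edges are coloured greedily. Each end forbids at most one of the three signs, provided
that pendant edges come before the other ones.
-/

lemma two_mul_card_filter_le_card {α : Type*} {s : Finset α} {f : α → α} {p : α → Prop}
    (hf : Set.InjOn f s) (hs : ∀ a ∈ s, f a ∈ s) (hp : ∀ a ∈ s, p a → ¬ p (f a)) :
    2 * Finset.card {a ∈ s | p a} ≤ s.card := by
  have hle : Finset.card {a ∈ s | p a} ≤ Finset.card {a ∈ s | ¬ p a} :=
    Finset.card_le_card_of_injOn f (fun a => by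
      simp only [Finset.coe_filter, Set.mem_ofPred_eq]; grind)
      (hf.mono (Finset.coe_subset.2 (Finset.filter_subset _ _)))
  have := Finset.card_filter_add_card_filter_not (s := s) p
  lia

section HalfEdges

/-! A multigraph, possibly with loops, is represented by its half-edges `E`: the half-edge `e`
starts at `src e`, and `rev e` is the other half of the same edge. -/

variable {V E C : Type*} [Fintype E] {rev : E → E}

lemma card_monochromatic_eq_add_two_mul (src : E → V) (hrev : Function.Involutive rev)
    (τ : V → C) (u : V) :
    Finset.card {e | τ (src e) = τ (src (rev e))} =
      Finset.card {e | (src e = u ↔ src (rev e) = u) ∧ τ (src e) = τ (src (rev e))} +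
        2 * Finset.card {e | src e = u ∧ src (rev e) ≠ u ∧ τ (src (rev e)) = τ u} := by
  have hswap : Finset.card {e | src e ≠ u ∧ src (rev e) = u ∧ τ (src e) = τ u} =
      Finset.card {e | src e = u ∧ src (rev e) ≠ u ∧ τ (src (rev e)) = τ u} :=
    Finset.card_nbij' rev rev
      (fun e => by simp only [Finset.coe_filter, Finset.mem_univ, Set.mem_ofPred_eq, hrev e]; tauto)
      (fun e => by simp only [Finset.coe_filter, Finset.mem_univ, Set.mem_ofPred_eq, hrev e]; tauto)
      (fun e _ => hrev e) (fun e _ => hrev e)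
  rw [two_mul]
  nth_rw 1 [← hswap]
  simp only [Finset.card_filter, ← Finset.sum_add_distrib]
  refine Finset.sum_congr rfl fun e _ => ?_
  by_cases h : src e = u <;> by_cases h' : src (rev e) = u <;> simp [h, h', eq_comm]

-- Minimise the number of monochromatic edges: then recolouring a vertex brings no improvement.
theorem exists_forall_card_mul_card_monochromatic_le [Fintype C] [Nonempty C] (src : E → V)
    (hrev : Function.Involutive rev) :
    ∃ τ : V → C, ∀ u, Fintype.card C *
      Finset.card {e | src e = u ∧ src (rev e) ≠ u ∧ τ (src (rev e)) = τ u} ≤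
        Finset.card {e | src e = u ∧ src (rev e) ≠ u} := by
  let monochromatic (τ : V → C) : ℕ := Finset.card {e | τ (src e) = τ (src (rev e))}
  let τ := Function.argmin monochromatic
  refine ⟨τ, fun u => ?_⟩
  have hrecolor (c : C) :
      Finset.card {e | src e = u ∧ src (rev e) ≠ u ∧ τ (src (rev e)) = τ u} ≤
        Finset.card {e | (src e = u ∧ src (rev e) ≠ u) ∧ τ (src (rev e)) = c} := by
    have hmin : monochromatic τ ≤ monochromatic (Function.update τ u c) :=
      Function.argmin_le monochromatic _
    simp only [monochromatic] at hmin
    rw [card_monochromatic_eq_add_two_mul src hrev τ u,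
      card_monochromatic_eq_add_two_mul src hrev (Function.update τ u c) u] at hmin
    have hfixed (e : E) : ((src e = u ↔ src (rev e) = u) ∧
        Function.update τ u c (src e) = Function.update τ u c (src (rev e))) ↔
        (src e = u ↔ src (rev e) = u) ∧ τ (src e) = τ (src (rev e)) := by
      grind
    have hmoved (e : E) : (src e = u ∧ src (rev e) ≠ u ∧
        Function.update τ u c (src (rev e)) = Function.update τ u c u) ↔
        (src e = u ∧ src (rev e) ≠ u) ∧ τ (src (rev e)) = c := by
      grind
    simp only [hfixed, hmoved] at hmin
    lia
  calc _ = ∑ _c : C, Finset.card {e | src e = u ∧ src (rev e) ≠ u ∧ τ (src (rev e)) = τ u} := by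
        simp
    _ ≤ ∑ c : C, Finset.card {e | (src e = u ∧ src (rev e) ≠ u) ∧ τ (src (rev e)) = c} :=
        Finset.sum_le_sum fun c _ => hrecolor c
    _ = _ := by
        simp only [← Finset.filter_filter (fun e => src e = u ∧ src (rev e) ≠ u)]
        exact (Finset.card_eq_sum_card_fiberwise (by simp)).symm

-- A loop is always monochromatic, but `Fwd` holds for at most one of its two halves.
theorem exists_forall_two_mul_card_monochromatic_le [Fintype C] (hC : Fintype.card C = 2)
    (src : E → V) (hrev : Function.Involutive rev) {Fwd : E → Prop}
    (hFwd : ∀ e, Fwd e → ¬ Fwd (rev e)) :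
    ∃ τ : V → C, ∀ u,
      2 * Finset.card {e | src e = u ∧ τ (src (rev e)) = τ u ∧ Fwd e} ≤
        Finset.card {e | src e = u} := by
  have : Nonempty C := Fintype.card_pos_iff.1 (by lia)
  obtain ⟨τ, hτ⟩ := exists_forall_card_mul_card_monochromatic_le (C := C) src hrev
  refine ⟨τ, fun u => ?_⟩
  have hloops : 2 * Finset.card {e ∈ {e | src e = u ∧ src (rev e) = u} | Fwd e} ≤
      Finset.card {e | src e = u ∧ src (rev e) = u} :=
    two_mul_card_filter_le_card hrev.injective.injOn
      (fun e => by simp only [Finset.mem_filter_univ, hrev e]; exact And.symm) fun e _ => hFwd e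
  have hcross := hτ u
  rw [hC] at hcross
  calc _ ≤ 2 * (Finset.card {e | src e = u ∧ src (rev e) ≠ u ∧ τ (src (rev e)) = τ u} +
          Finset.card {e ∈ {e | src e = u ∧ src (rev e) = u} | Fwd e}) := by
        gcongr
        refine (Finset.card_le_card fun e => ?_).trans (Finset.card_union_le _ _)
        simp only [Finset.mem_union, Finset.mem_filter, Finset.mem_univ, true_and]
        tauto
    _ ≤ Finset.card {e | src e = u ∧ src (rev e) ≠ u} +
          Finset.card {e | src e = u ∧ src (rev e) = u} := by lia
    _ = _ := by
        rw [← Finset.card_filter_add_card_filter_not (s := {e | src e = u})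
          (fun e => src (rev e) = u), Finset.filter_filter, Finset.filter_filter, add_comm]

end HalfEdges

lemma exists_forall_of_wellFounded {α C : Type*} [Nonempty C] {r : α → α → Prop}
    (hr : WellFounded r) {P : α → (α → C) → C → Prop}
    (hP : ∀ e g g' c, (∀ f, r f e → g f = g' f) → P e g c → P e g' c)
    (hex : ∀ e g, ∃ c, P e g c) : ∃ g : α → C, ∀ e, P e g (g e) := by
  choose pick hpick using hex
  let extend (e : α) (rec : ∀ f, r f e → C) (f : α) : C :=
    if h : r f e then rec f h else Classical.arbitrary C
  let g : α → C := hr.fix fun e rec => pick e (extend e rec)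
  refine ⟨g, fun e => ?_⟩
  rw [show g e = pick e (extend e fun f _ => g f) from hr.fix_eq _ e]
  exact hP e _ g _ (fun f hf => by simp [extend, hf]) (hpick e _)

lemma exists_notMem_notMem {α : Type*} (hα : 2 < ENat.card α) {s t : Set α}
    (hs : s.Subsingleton) (ht : t.Subsingleton) : ∃ a, a ∉ s ∧ a ∉ t := by
  by_contra! h
  have hst : s ∪ t = Set.univ := Set.eq_univ_of_forall fun a => or_iff_not_imp_left.2 (h a)
  refine hα.not_ge ?_
  calc ENat.card α = (s ∪ t).encard := by rw [hst, Set.encard_univ]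
    _ ≤ s.encard + t.encard := Set.encard_union_le s t
    _ ≤ 1 + 1 := add_le_add (Set.encard_le_one_iff_subsingleton.2 hs)
        (Set.encard_le_one_iff_subsingleton.2 ht)
    _ = 2 := one_add_one_eq_two

section Degree

variable {V : Type*} {G : SimpleGraph V} {x a b c : V} [Fintype (G.neighborSet x)]

lemma eq_of_adj_of_degree_eq_one (h : G.degree x = 1) (ha : G.Adj x a) (hb : G.Adj x b) :
    a = b :=
  (SimpleGraph.degree_eq_one_iff_existsUnique_adj.1 h).unique ha hb

lemma neighborFinset_eq_pair (h : G.degree x = 2) (ha : G.Adj x a) (hb : G.Adj x b)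
    (hab : a ≠ b) : G.neighborFinset x = {a, b} := by
  refine (Finset.eq_of_subset_of_card_le (fun z hz => ?_) ?_).symm
  · rw [SimpleGraph.mem_neighborFinset]
    rcases Finset.mem_insert.1 hz with rfl | hz
    · exact ha
    · exact Finset.mem_singleton.1 hz ▸ hb
  · rw [Finset.card_pair hab, SimpleGraph.card_neighborFinset_eq_degree, h]

lemma eq_of_adj_of_degree_eq_two (h : G.degree x = 2) (ha : G.Adj x a) (hb : G.Adj x b)
    (hc : G.Adj x c) (hba : b ≠ a) (hca : c ≠ a) : b = c := by
  have hmem : c ∈ G.neighborFinset x := (G.mem_neighborFinset x c).2 hc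
  rw [neighborFinset_eq_pair h ha hb hba.symm] at hmem
  simpa [hca, eq_comm] using hmem

lemma exists_adj_ne_of_one_lt_degree (h : 1 < G.degree x) (a : V) : ∃ b, G.Adj x b ∧ b ≠ a := by
  rw [← G.card_neighborFinset_eq_degree] at h
  simpa using Finset.exists_mem_ne h a

lemma degree_eq_one_or_two_or_three (h : G.Adj x a) (hx : G.degree x ≤ 3) :
    G.degree x = 1 ∨ G.degree x = 2 ∨ G.degree x = 3 := by
  have := h.degree_pos_left
  lia

end Degree

lemma nonempty_iso_top_fin_two {V : Type*} {G : SimpleGraph V} [G.LocallyFinite]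
    (hconn : G.Connected) {u v : V} (huv : G.Adj u v) (hu : G.degree u = 1)
    (hv : G.degree v = 1) : Nonempty (G ≃g (⊤ : SimpleGraph (Fin 2))) := by
  have hmem (z : V) : z = u ∨ z = v := by
    induction (SimpleGraph.reachable_iff_reflTransGen u z).1 (hconn.preconnected u z) with
    | refl => exact .inl rfl
    | tail _ hadj ih =>
      rcases ih with rfl | rfl
      · exact .inr (eq_of_adj_of_degree_eq_one hu hadj huv)
      · exact .inl (eq_of_adj_of_degree_eq_one hv hadj huv.symm)
  have hcard : Nat.card V = 2 := Nat.card_eq_two_iff.2 ⟨u, v, huv.ne, by ext z; simpa using hmem z⟩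
  have htop : G = ⊤ := by
    ext a b
    rcases hmem a with rfl | rfl <;> rcases hmem b with rfl | rfl <;>
      simp [huv, huv.symm, huv.ne, huv.ne.symm]
  have : Finite V := Nat.finite_of_card_ne_zero (by lia)
  exact ⟨htop ▸ SimpleGraph.Iso.completeGraph (Finite.equivFinOfCardEq hcard)⟩

/-- An oriented path `src - fst - snd - dst` whose two inner vertices have degree 2. The ends are
arbitrary and may coincide, so a triangle through two vertices of degree 2 is also a thread. -/
structure Thread {V : Type*} (G : SimpleGraph V) [G.LocallyFinite] where
  (src fst snd dst : V)
  adj_src_fst : G.Adj src fst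
  adj_fst_snd : G.Adj fst snd
  adj_dst_snd : G.Adj dst snd
  degree_fst : G.degree fst = 2
  degree_snd : G.degree snd = 2
  src_ne_snd : src ≠ snd
  dst_ne_fst : dst ≠ fst

namespace Thread

variable {V : Type*} {G : SimpleGraph V} [G.LocallyFinite]

/-- The first edge of a thread; the last edge of `t` is `t.rev.head`. -/
def head (t : Thread G) : Sym2 V := s(t.src, t.fst)

/-- The same thread with the opposite orientation. -/
def rev (t : Thread G) : Thread G where
  src := t.dst
  fst := t.snd
  snd := t.fst
  dst := t.src
  adj_src_fst := t.adj_dst_snd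
  adj_fst_snd := t.adj_fst_snd.symm
  adj_dst_snd := t.adj_src_fst
  degree_fst := t.degree_snd
  degree_snd := t.degree_fst
  src_ne_snd := t.dst_ne_fst
  dst_ne_fst := t.src_ne_snd

lemma rev_involutive : Function.Involutive (rev (G := G)) := fun _ => rfl

lemma eq_of_src_eq_of_fst_eq {t t' : Thread G} (hsrc : t.src = t'.src) (hfst : t.fst = t'.fst) :
    t = t' := by
  obtain ⟨a, x, y, b, hax, hxy, hby, hx, hy, hay, hbx⟩ := t
  obtain ⟨a', x', y', b', hax', hxy', hby', hx', hy', hay', hbx'⟩ := t'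
  obtain rfl : a = a' := hsrc
  obtain rfl : x = x' := hfst
  obtain rfl := eq_of_adj_of_degree_eq_two hx hax.symm hxy hxy' hay.symm hay'.symm
  obtain rfl := eq_of_adj_of_degree_eq_two hy hxy.symm hby.symm hby'.symm hbx hbx'
  rfl

lemma head_ne_head_rev (t : Thread G) : t.head ≠ t.rev.head := by
  have := t.src_ne_snd
  have := t.adj_fst_snd.ne
  simp only [head, rev, ne_eq, Sym2.eq_iff]
  tauto

lemma card_filter_src_eq_le_degree [Fintype (Thread G)] (u : V) :
    Finset.card {t : Thread G | t.src = u} ≤ G.degree u := by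
  rw [← G.card_neighborFinset_eq_degree]
  refine Finset.card_le_card_of_injOn fst (fun t ht => ?_) fun t ht t' ht' hfst => ?_
  · obtain rfl : t.src = u := by simpa using ht
    simpa using t.adj_src_fst
  · simp only [Finset.coe_filter, Finset.mem_univ, true_and, Set.mem_ofPred_eq] at ht ht'
    exact eq_of_src_eq_of_fst_eq (ht.trans ht'.symm) hfst

instance [Finite V] : Finite (Thread G) :=
  Finite.of_injective (fun t => (t.src, t.fst)) fun _ _ h =>
    eq_of_src_eq_of_fst_eq (Prod.ext_iff.1 h).1 (Prod.ext_iff.1 h).2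

end Thread

section SignedColoring

variable {V : Type*}

/-- The excess of red over blue at `x` in the signed colouring `g`, where `1` stands for two red
copies of an edge, `-1` for two blue copies, and `0` for one copy of each colour. Thus `x` has red
degree `deg x + excess x` and blue degree `deg x - excess x`. -/
noncomputable def excess (G : SimpleGraph V) [G.LocallyFinite] (g : Sym2 V → SignType) (x : V) :
    ℤ :=
  ∑ y ∈ G.neighborFinset x, (g s(x, y) : ℤ)

/-- The number `0`, `1` or `2` of red copies of an edge in the signed colouring `g`. -/
def redCopies (g : Sym2 V → SignType) (e : Sym2 V) : ℕ :=
  ((g e : ℤ) + 1).toNat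

/-- The condition of local irregularity at the edge `uv`, expressed through the signed colouring
`g`. -/
def IsIrregularEdge (G : SimpleGraph V) [G.LocallyFinite] (g : Sym2 V → SignType) (u v : V) :
    Prop :=
  (g s(u, v) ≠ -1 → (G.degree u : ℤ) + excess G g u ≠ G.degree v + excess G g v) ∧
    (g s(u, v) ≠ 1 → (G.degree u : ℤ) - excess G g u ≠ G.degree v - excess G g v)

lemma IsIrregularEdge.symm {G : SimpleGraph V} [G.LocallyFinite] {g : Sym2 V → SignType} {u v : V}
    (h : IsIrregularEdge G g u v) : IsIrregularEdge G g v u := by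
  rw [IsIrregularEdge, Sym2.eq_swap]
  exact ⟨fun hg => (h.1 hg).symm, fun hg => (h.2 hg).symm⟩

lemma natCast_redCopies (g : Sym2 V → SignType) (e : Sym2 V) : (redCopies g e : ℤ) = g e + 1 := by
  rw [redCopies]
  generalize g e = s
  decide +revert

lemma natCast_two_sub_redCopies (g : Sym2 V → SignType) (e : Sym2 V) :
    ((2 - redCopies g e : ℕ) : ℤ) = 1 - g e := by
  rw [redCopies]
  generalize g e = s
  decide +revert

lemma redCopies_le_two (g : Sym2 V → SignType) (e : Sym2 V) : redCopies g e ≤ 2 := by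
  rw [redCopies]
  generalize g e = s
  decide +revert

lemma one_le_redCopies_iff (g : Sym2 V → SignType) (e : Sym2 V) :
    1 ≤ redCopies g e ↔ g e ≠ -1 := by
  rw [redCopies]
  generalize g e = s
  decide +revert

lemma redCopies_le_one_iff (g : Sym2 V → SignType) (e : Sym2 V) :
    redCopies g e ≤ 1 ↔ g e ≠ 1 := by
  rw [redCopies]
  generalize g e = s
  decide +revert

lemma redCopies_eq_one_iff (g : Sym2 V → SignType) (e : Sym2 V) :
    redCopies g e = 1 ↔ g e = 0 := by
  rw [redCopies]
  generalize g e = s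
  decide +revert

variable [Fintype V] [DecidableEq V] {G : SimpleGraph V}

lemma sum_incident_eq_sum_neighborFinset {M : Type*} [AddCommMonoid M] (f : Sym2 V → M) (x : V) :
    ∑ e ∈ G.edgeFinset with x ∈ e, f e = ∑ y ∈ G.neighborFinset x, f s(x, y) := by
  refine (Finset.sum_bij (fun y _ => s(x, y)) (by simp)
    (fun _ _ _ _ => Sym2.congr_right.1) (fun e he => ?_) (by simp)).symm
  obtain ⟨hedge, hx⟩ := Finset.mem_filter.1 he
  obtain ⟨y, rfl⟩ := Sym2.mem_iff_exists.1 hx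
  exact ⟨y, by simpa using hedge, rfl⟩

lemma natCast_redDeg_redCopies (g : Sym2 V → SignType) (x : V) :
    (redDeg G (redCopies g) x : ℤ) = G.degree x + excess G g x := by
  simp only [redDeg, excess, Nat.cast_sum, natCast_redCopies, sum_incident_eq_sum_neighborFinset,
    Finset.sum_add_distrib, Finset.sum_const, SimpleGraph.card_neighborFinset_eq_degree]
  simp [add_comm]

lemma natCast_blueDeg_redCopies (g : Sym2 V → SignType) (x : V) :
    (blueDeg G (redCopies g) x : ℤ) = G.degree x - excess G g x := by
  simp only [blueDeg, excess, Nat.cast_sum, natCast_two_sub_redCopies,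
    sum_incident_eq_sum_neighborFinset, Finset.sum_sub_distrib, Finset.sum_const,
    SimpleGraph.card_neighborFinset_eq_degree]
  simp

lemma isLIR2_redCopies {g : Sym2 V → SignType} (h : ∀ u v, G.Adj u v → IsIrregularEdge G g u v) :
    IsLIR2 G (redCopies g) := by
  refine ⟨fun e _ => redCopies_le_two g e, fun u v huv => ?_⟩
  rw [one_le_redCopies_iff, redCopies_le_one_iff]
  zify
  simp only [natCast_redDeg_redCopies, natCast_blueDeg_redCopies]
  exact h u v huv

end SignedColoring

section Admissible

variable {V : Type*} {G : SimpleGraph V} [G.LocallyFinite] {τ : V → SignType}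
  {g : Sym2 V → SignType} {u v x y : V}

/-- Local conditions on a signed colouring `g` which make it locally irregular. Each vertex `u` of
degree 3 has a dominant colour `τ u`, worn by all its edges except for at most one edge coloured
`0`, so that its excess is `2 * τ u` or `3 * τ u`; the other fields separate the degrees on the
edges between vertices of degree at most 2 and on the exceptional edges. -/
structure IsAdmissible (G : SimpleGraph V) [G.LocallyFinite] (τ : V → SignType)
    (g : Sym2 V → SignType) : Prop where
  sign_ne_zero (v : V) : τ v ≠ 0
  head_ne_head_rev (t : Thread G) : g t.head ≠ g t.rev.head
  pendant_ne_zero {u v : V} : G.Adj u v → G.degree u = 1 → g s(u, v) ≠ 0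
  pendant_ne_neg {u v y : V} : G.Adj u v → G.degree u = 1 → G.degree v = 2 → G.Adj v y → y ≠ u →
    g s(u, v) ≠ -g s(v, y)
  branch_eq_zero_or_eq_sign {u x : V} : G.Adj u x → G.degree u = 3 →
    g s(u, x) = 0 ∨ g s(u, x) = τ u
  branch_zero_unique {u x y : V} : G.Adj u x → G.Adj u y → G.degree u = 3 → g s(u, x) = 0 →
    g s(u, y) = 0 → x = y
  beside_branch_zero_ne_sign {u x y : V} : G.Adj u x → G.degree u = 3 → g s(u, x) = 0 →
    G.Adj x y → y ≠ u → g s(x, y) ≠ τ u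

lemma excess_of_degree_eq_one (huv : G.Adj u v) (hu : G.degree u = 1) :
    excess G g u = g s(u, v) := by
  obtain ⟨w, hw⟩ := Finset.card_eq_one.1 ((G.card_neighborFinset_eq_degree u).trans hu)
  obtain rfl : v = w := by simpa [hw] using (G.mem_neighborFinset u v).2 huv
  rw [excess, hw, Finset.sum_singleton]

lemma excess_of_degree_eq_two (hx : G.Adj u x) (hy : G.Adj u y) (hxy : x ≠ y)
    (hu : G.degree u = 2) : excess G g u = g s(u, x) + g s(u, y) := by
  rw [excess, neighborFinset_eq_pair hu hx hy hxy, Finset.sum_pair hxy]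

namespace IsAdmissible

variable (h : IsAdmissible G τ g)
include h

lemma excess_of_degree_eq_three (hu : G.degree u = 3) :
    excess G g u = 2 * (τ u : ℤ) ∨
      excess G g u = 3 * (τ u : ℤ) ∧ ∀ x, G.Adj u x → g s(u, x) = τ u := by
  obtain ⟨a, b, c, hab, hac, hbc, hN⟩ :=
    Finset.card_eq_three.1 ((G.card_neighborFinset_eq_degree u).trans hu)
  have hadj (x : V) : G.Adj u x ↔ x = a ∨ x = b ∨ x = c := by
    simp [← G.mem_neighborFinset, hN]
  have ha : G.Adj u a := by simp [hadj]
  have hb : G.Adj u b := by simp [hadj]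
  have hc : G.Adj u c := by simp [hadj]
  have hsum : excess G g u = g s(u, a) + (g s(u, b) + g s(u, c)) := by
    rw [excess, hN, Finset.sum_insert (by simp [hab, hac]), Finset.sum_pair hbc]
  have hzero {x y : V} (hx : G.Adj u x) (hy : G.Adj u y) (hxy : x ≠ y) (hgx : g s(u, x) = 0) :
      g s(u, y) = τ u :=
    (h.branch_eq_zero_or_eq_sign hy hu).resolve_left
      fun hgy => hxy (h.branch_zero_unique hx hy hu hgx hgy)
  rcases h.branch_eq_zero_or_eq_sign ha hu with hga | hga
  · left
    rw [hsum, hga, hzero ha hb hab hga, hzero ha hc hac hga]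
    simp [two_mul]
  rcases h.branch_eq_zero_or_eq_sign hb hu with hgb | hgb
  · left
    rw [hsum, hga, hgb, hzero hb hc hbc hgb]
    simp [two_mul]
  rcases h.branch_eq_zero_or_eq_sign hc hu with hgc | hgc
  · left
    rw [hsum, hga, hgb, hgc]
    simp [two_mul]
  · right
    refine ⟨by rw [hsum, hga, hgb, hgc]; ring, fun x hx => ?_⟩
    rcases (hadj x).1 hx with rfl | rfl | rfl <;> assumption

lemma isIrregularEdge_one_two (huv : G.Adj u v) (hu : G.degree u = 1) (hv : G.degree v = 2) :
    IsIrregularEdge G g u v := by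
  obtain ⟨y, hvy, hyu⟩ := exists_adj_ne_of_one_lt_degree (hv.symm ▸ one_lt_two) u
  have hne_zero := h.pendant_ne_zero huv hu
  have hne_neg := h.pendant_ne_neg huv hu hv hvy hyu
  rw [IsIrregularEdge, excess_of_degree_eq_one huv hu,
    excess_of_degree_eq_two huv.symm hvy hyu.symm hv, Sym2.eq_swap (a := v), hu, hv]
  generalize g s(u, v) = s at *
  generalize g s(v, y) = t at *
  revert s t
  decide

lemma isIrregularEdge_one_three (huv : G.Adj u v) (hu : G.degree u = 1) (hv : G.degree v = 3) :
    IsIrregularEdge G g u v := by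
  have hcolor : g s(u, v) = τ v := by
    rw [Sym2.eq_swap]
    exact (h.branch_eq_zero_or_eq_sign huv.symm hv).resolve_left
      (Sym2.eq_swap ▸ h.pendant_ne_zero huv hu)
  have hτ := h.sign_ne_zero v
  rw [IsIrregularEdge, excess_of_degree_eq_one huv hu, hcolor, hu, hv]
  rcases h.excess_of_degree_eq_three hv with hexcess | ⟨hexcess, -⟩ <;> rw [hexcess] <;>
  · generalize τ v = s at hτ ⊢
    revert s
    decide

lemma isIrregularEdge_two_two (huv : G.Adj u v) (hu : G.degree u = 2) (hv : G.degree v = 2) :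
    IsIrregularEdge G g u v := by
  obtain ⟨x, hux, hxv⟩ := exists_adj_ne_of_one_lt_degree (hu.symm ▸ one_lt_two) v
  obtain ⟨y, hvy, hyu⟩ := exists_adj_ne_of_one_lt_degree (hv.symm ▸ one_lt_two) u
  have hne : g s(x, u) ≠ g s(y, v) :=
    h.head_ne_head_rev ⟨x, u, v, y, hux.symm, huv, hvy.symm, hu, hv, hxv, hyu⟩
  rw [IsIrregularEdge, excess_of_degree_eq_two huv hux hxv.symm hu,
    excess_of_degree_eq_two huv.symm hvy hyu.symm hv, Sym2.eq_swap (a := v), hu, hv,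
    Sym2.eq_swap (a := u) (b := x), Sym2.eq_swap (a := v) (b := y)]
  generalize g s(u, v) = r at *
  generalize g s(x, u) = s at *
  generalize g s(y, v) = t at *
  revert r s t
  decide

lemma isIrregularEdge_three_two (huv : G.Adj u v) (hu : G.degree u = 3) (hv : G.degree v = 2) :
    IsIrregularEdge G g u v := by
  obtain ⟨y, hvy, hyu⟩ := exists_adj_ne_of_one_lt_degree (hv.symm ▸ one_lt_two) u
  have hτ := h.sign_ne_zero u
  have hcolor := h.branch_eq_zero_or_eq_sign huv hu
  have hbeside (hzero : g s(u, v) = 0) := h.beside_branch_zero_ne_sign huv hu hzero hvy hyu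
  rw [IsIrregularEdge, excess_of_degree_eq_two huv.symm hvy hyu.symm hv, Sym2.eq_swap (a := v),
    hu, hv]
  rcases h.excess_of_degree_eq_three hu with hexcess | ⟨hexcess, hall⟩ <;> rw [hexcess]
  · generalize g s(u, v) = s at hcolor hbeside ⊢
    generalize g s(v, y) = t at hbeside ⊢
    generalize τ u = r at hτ hcolor hbeside ⊢
    revert r s t
    decide
  · rw [hall v huv]
    generalize g s(v, y) = t
    generalize τ u = r at hτ ⊢
    revert r t
    decide

lemma isIrregularEdge (hsub : ∀ v, G.degree v ≤ 3)
    (hindep : ∀ u v, G.degree u = 3 → G.degree v = 3 → ¬ G.Adj u v)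
    (hpendant : ∀ u v, G.Adj u v → G.degree u = 1 → G.degree v ≠ 1) (huv : G.Adj u v) :
    IsIrregularEdge G g u v := by
  rcases degree_eq_one_or_two_or_three huv (hsub u) with hu | hu | hu <;>
    rcases degree_eq_one_or_two_or_three huv.symm (hsub v) with hv | hv | hv
  · exact absurd hv (hpendant u v huv hu)
  · exact h.isIrregularEdge_one_two huv hu hv
  · exact h.isIrregularEdge_one_three huv hu hv
  · exact (h.isIrregularEdge_one_two huv.symm hv hu).symm
  · exact h.isIrregularEdge_two_two huv hu hv
  · exact (h.isIrregularEdge_three_two huv.symm hv hu).symm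
  · exact (h.isIrregularEdge_one_three huv.symm hv hu).symm
  · exact h.isIrregularEdge_three_two huv hu hv
  · exact absurd huv (hindep u v hu hv)

end IsAdmissible

end Admissible

section EdgeRank

variable {V : Type*} {G : SimpleGraph V} [G.LocallyFinite] {e f : Sym2 V}

/-- The edges at a vertex of degree 3, whose colours are fixed before the greedy colouring. -/
def IsBranchEdge (G : SimpleGraph V) [G.LocallyFinite] (e : Sym2 V) : Prop :=
  ∃ u ∈ e, G.degree u = 3

/-- The edges at a vertex of degree 1. -/
def IsPendantEdge (G : SimpleGraph V) [G.LocallyFinite] (e : Sym2 V) : Prop :=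
  ∃ u ∈ e, G.degree u = 1

lemma isBranchEdge_mk_iff {u v : V} :
    IsBranchEdge G s(u, v) ↔ G.degree u = 3 ∨ G.degree v = 3 := by
  simp [IsBranchEdge]

lemma isPendantEdge_mk_iff {u v : V} :
    IsPendantEdge G s(u, v) ↔ G.degree u = 1 ∨ G.degree v = 1 := by
  simp [IsPendantEdge]

/-- The position of an edge in the order of the greedy colouring: branch edges first, then pendant
edges, then all others, with ties broken by an arbitrary enumeration. -/
noncomputable def edgeRank (G : SimpleGraph V) [G.LocallyFinite] [Finite V] (e : Sym2 V) :
    ℕ ×ₗ Fin (Nat.card (Sym2 V)) :=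
  toLex (if IsBranchEdge G e then 0 else if IsPendantEdge G e then 1 else 2, Finite.equivFin _ e)

variable [Finite V]

lemma edgeRank_injective : Function.Injective (edgeRank G) := fun _ _ h =>
  (Finite.equivFin _).injective (Prod.ext_iff.1 (toLex.injective h)).2

lemma edgeRank_lt_of_isBranchEdge (he : IsBranchEdge G e) (hf : ¬ IsBranchEdge G f) :
    edgeRank G e < edgeRank G f := by
  simp only [edgeRank, Prod.Lex.toLex_lt_toLex, hf, he]
  grind

lemma isBranchEdge_of_edgeRank_lt (h : edgeRank G e < edgeRank G f) (hf : IsBranchEdge G f) :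
    IsBranchEdge G e := by
  by_contra he
  exact lt_asymm h (edgeRank_lt_of_isBranchEdge hf he)

lemma isPendantEdge_of_edgeRank_lt (h : edgeRank G e < edgeRank G f) (hf : IsPendantEdge G f)
    (he : ¬ IsBranchEdge G e) : IsPendantEdge G e := by
  by_contra he'
  have hf' : ¬ IsBranchEdge G f := mt (isBranchEdge_of_edgeRank_lt h) he
  simp only [edgeRank, Prod.Lex.toLex_lt_toLex, hf, hf', he, he'] at h
  grind

end EdgeRank

section Muted

variable {V : Type*} {G : SimpleGraph V} [G.LocallyFinite] [Finite V] {τ : V → SignType}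
  {u x : V}

/-- A thread is muted when its ends have the same sign and its first edge precedes its last one.
The first edge of a muted thread gives up the sign of `src` and is coloured `0`, as otherwise both
end edges of a thread between vertices of degree 3 would get the same colour. -/
def Thread.IsMuted (τ : V → SignType) (t : Thread G) : Prop :=
  τ t.dst = τ t.src ∧ edgeRank G t.head < edgeRank G t.rev.head

lemma exists_sign_forall_eq_of_isMuted (G : SimpleGraph V) [G.LocallyFinite] :
    ∃ τ : V → SignType, (∀ v, τ v ≠ 0) ∧ ∀ t t' : Thread G, G.degree t.src ≤ 3 →
      t.src = t'.src → t.IsMuted τ → t'.IsMuted τ → t = t' := by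
  have := Fintype.ofFinite (Thread G)
  obtain ⟨τ, hτ⟩ := exists_forall_two_mul_card_monochromatic_le
    (C := {s : SignType // s ≠ 0}) (by decide) Thread.src (Thread.rev_involutive (G := G))
    (Fwd := fun t => edgeRank G t.head < edgeRank G t.rev.head) fun t => lt_asymm
  refine ⟨fun v => τ v, fun v => (τ v).2, fun t t' hdeg hsrc ht ht' => ?_⟩
  have htwo := (hτ t.src).trans (Thread.card_filter_src_eq_le_degree t.src)
  have hone : Finset.card {t' : Thread G | t'.src = t.src ∧ τ t'.rev.src = τ t.src ∧
      edgeRank G t'.head < edgeRank G t'.rev.head} ≤ 1 := by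
    lia
  refine Finset.card_le_one.1 hone t ?_ t' ?_ <;> simp only [Finset.mem_filter_univ]
  · exact ⟨trivial, Subtype.ext ht.1, ht.2⟩
  · exact ⟨hsrc.symm, Subtype.ext (hsrc ▸ ht'.1), ht'.2⟩

/-- The colour of the edge `ux` at a vertex `u` of degree 3, given the signs `τ`. -/
noncomputable def branchColor (G : SimpleGraph V) [G.LocallyFinite] (τ : V → SignType) (u x : V) :
    SignType :=
  if ∃ t : Thread G, t.src = u ∧ t.fst = x ∧ t.IsMuted τ then 0 else τ u

lemma branchColor_eq_zero_iff (hτ : τ u ≠ 0) :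
    branchColor G τ u x = 0 ↔ ∃ t : Thread G, t.src = u ∧ t.fst = x ∧ t.IsMuted τ := by
  simp [branchColor, hτ]

lemma branchColor_eq_zero_or_eq (G : SimpleGraph V) [G.LocallyFinite] (τ : V → SignType) (u x : V) :
    branchColor G τ u x = 0 ∨ branchColor G τ u x = τ u := by
  rw [branchColor]
  split_ifs <;> simp

lemma Thread.branchColor_src_fst (t : Thread G) :
    branchColor G τ t.src t.fst = if t.IsMuted τ then 0 else τ t.src := by
  have (t' : Thread G) : (t'.src = t.src ∧ t'.fst = t.fst ∧ t'.IsMuted τ) ↔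
      t' = t ∧ t.IsMuted τ := by
    refine ⟨fun ⟨hsrc, hfst, h⟩ => ?_, fun ⟨h, hm⟩ => by simp [h, hm]⟩
    obtain rfl := eq_of_src_eq_of_fst_eq hsrc hfst
    exact ⟨rfl, h⟩
  simp only [branchColor, this, exists_eq_left]

end Muted

section Greedy

variable {V : Type*} {G : SimpleGraph V} [G.LocallyFinite] [Finite V] {τ : V → SignType}
  {g g' : Sym2 V → SignType} {a x : V}

/-- The colours that the conditions around the end `x` of the edge `ax` forbid for this edge, given
the colours `g` of the edges that precede it. The vertex `y` is the other neighbour of `x`. In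
`besideBranch` the edge `xy` may be coloured `0`, and `ax` must then avoid the sign `τ y`; when `a`
is a leaf this cannot happen, and `besidePendant` applies instead. -/
inductive Forbidden (G : SimpleGraph V) [G.LocallyFinite] (τ : V → SignType)
    (g : Sym2 V → SignType) (a x : V) : SignType → Prop
  | pendant : G.degree x = 1 → Forbidden G τ g a x 0
  | besidePendant {y : V} : G.degree x = 2 → G.Adj x y → y ≠ a →
      (G.degree y = 1 ∨ G.degree a = 1 ∧ G.degree y = 3) →
      edgeRank G s(x, y) < edgeRank G s(a, x) → Forbidden G τ g a x (-g s(x, y))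
  | thread (t : Thread G) : t.src = a → t.fst = x →
      edgeRank G t.rev.head < edgeRank G t.head → Forbidden G τ g a x (g t.rev.head)
  | besideBranch {y : V} : G.degree x = 2 → G.Adj x y → y ≠ a → G.degree y = 3 →
      G.degree a ≠ 1 → Forbidden G τ g a x (τ y)

lemma Forbidden.congr (hg : ∀ f, edgeRank G f < edgeRank G s(a, x) → g f = g' f) {k : SignType}
    (h : Forbidden G τ g a x k) : Forbidden G τ g' a x k := by
  cases h with
  | pendant hx => exact .pendant hx
  | besidePendant hx hxy hya hdeg hlt => exact hg _ hlt ▸ .besidePendant hx hxy hya hdeg hlt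
  | thread t hsrc hfst hlt =>
    refine hg _ ?_ ▸ .thread t hsrc hfst hlt
    rwa [← hsrc, ← hfst]
  | besideBranch hx hxy hya hy ha => exact .besideBranch hx hxy hya hy ha

lemma subsingleton_setOf_forbidden (hax : G.Adj a x) :
    {k | Forbidden G τ g a x k}.Subsingleton := by
  have hunique {y z : V} (hx : G.degree x = 2) (hy : G.Adj x y) (hz : G.Adj x z) (hya : y ≠ a)
      (hza : z ≠ a) : y = z :=
    eq_of_adj_of_degree_eq_two hx hax.symm hy hz hya hza
  have hthread (t : Thread G) {y : V} (hsrc : t.src = a) (hfst : t.fst = x) (hy : G.Adj x y)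
      (hya : y ≠ a) : G.degree y = 2 := by
    subst hfst hsrc
    rw [hunique t.degree_fst hy t.adj_fst_snd hya t.src_ne_snd.symm, t.degree_snd]
  -- The degrees of `a`, `x` and `y` tell the constructors apart, and `x` determines `y`.
  rintro k (hx | ⟨hx, hxy, hya, hy, -⟩ | ⟨t, hsrc, hfst, -⟩ | ⟨hx, hxy, hya, hy, ha⟩) k'
    (hx' | ⟨hx', hxy', hya', hy', -⟩ | ⟨t', hsrc', hfst', -⟩ | ⟨hx', hxy', hya', hy', ha'⟩)
  · rfl
  · lia
  · exact absurd (hfst' ▸ t'.degree_fst) (by lia)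
  · lia
  · lia
  · rw [hunique hx hxy hxy' hya hya']
  · have := hthread t' hsrc' hfst' hxy hya
    lia
  · obtain rfl := hunique hx hxy hxy' hya hya'
    lia
  · exact absurd (hfst ▸ t.degree_fst) (by lia)
  · have := hthread t hsrc hfst hxy' hya'
    lia
  · rw [Thread.eq_of_src_eq_of_fst_eq (hsrc.trans hsrc'.symm) (hfst.trans hfst'.symm)]
  · have := hthread t hsrc hfst hxy' hya'
    lia
  · lia
  · obtain rfl := hunique hx hxy hxy' hya hya'
    lia
  · have := hthread t' hsrc' hfst' hxy hya
    lia
  · rw [hunique hx hxy hxy' hya hya']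

/-- The colour `k` suits the edge `ax` as far as the end `a` of degree 3, or else the constraints
around the end `x`, are concerned. -/
def IsAllowed (G : SimpleGraph V) [G.LocallyFinite] (τ : V → SignType) (g : Sym2 V → SignType)
    (a x : V) (k : SignType) : Prop :=
  (G.degree a = 3 → k = branchColor G τ a x) ∧
    (G.degree a ≠ 3 → G.degree x ≠ 3 → ¬ Forbidden G τ g a x k)

lemma IsAllowed.congr {k : SignType} (hg : ∀ f, edgeRank G f < edgeRank G s(a, x) → g f = g' f)
    (h : IsAllowed G τ g a x k) : IsAllowed G τ g' a x k :=
  ⟨h.1, fun ha hx hf => h.2 ha hx (hf.congr fun f hlt => (hg f hlt).symm)⟩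

lemma exists_isAllowed_at_both_ends (hindep : ∀ u v, G.degree u = 3 → G.degree v = 3 → ¬ G.Adj u v)
    (τ : V → SignType) (e : Sym2 V) (g : Sym2 V → SignType) :
    ∃ k, ∀ a x, e = s(a, x) → G.Adj a x → IsAllowed G τ g a x k := by
  induction e with | _ p q =>
  by_cases hpq : G.Adj p q
  swap
  · exact ⟨0, fun a x he hax => absurd (by rwa [← G.mem_edgeSet, he]) hpq⟩
  suffices ∃ k, IsAllowed G τ g p q k ∧ IsAllowed G τ g q p k by
    obtain ⟨k, hkp, hkq⟩ := this
    refine ⟨k, fun a x he _ => ?_⟩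
    rcases Sym2.eq_iff.1 he with ⟨rfl, rfl⟩ | ⟨rfl, rfl⟩ <;> assumption
  simp only [IsAllowed]
  by_cases hp : G.degree p = 3
  · have hq : G.degree q ≠ 3 := fun hq => hindep p q hp hq hpq
    simp [hp, hq]
  by_cases hq : G.degree q = 3
  · simp [hp, hq]
  have hcard : 2 < ENat.card SignType := by
    rw [ENat.card_eq_coe_fintype_card]
    decide
  simpa [hp, hq] using exists_notMem_notMem hcard
    (subsingleton_setOf_forbidden (τ := τ) (g := g) hpq)
    (subsingleton_setOf_forbidden (τ := τ) (g := g) hpq.symm)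

lemma exists_forall_isAllowed (hindep : ∀ u v, G.degree u = 3 → G.degree v = 3 → ¬ G.Adj u v)
    (τ : V → SignType) :
    ∃ g : Sym2 V → SignType, ∀ a x, G.Adj a x → IsAllowed G τ g a x (g s(a, x)) := by
  obtain ⟨g, hg⟩ := exists_forall_of_wellFounded
    (InvImage.wf (edgeRank G) wellFounded_lt)
    (P := fun e g k => ∀ a x, e = s(a, x) → G.Adj a x → IsAllowed G τ g a x k)
    (fun e g g' k hg hk a x he hax =>
      (hk a x he hax).congr fun f hf => hg f (he ▸ hf))
    (exists_isAllowed_at_both_ends hindep τ)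
  exact ⟨g, fun a x => hg _ a x rfl⟩

end Greedy

section AllowedAdmissible

variable {V : Type*} {G : SimpleGraph V} [G.LocallyFinite] [Finite V] {τ : V → SignType}
  {g : Sym2 V → SignType} {u v x y : V}

variable (hg : ∀ a x, G.Adj a x → IsAllowed G τ g a x (g s(a, x)))
include hg

lemma pendant_ne_neg_of_isAllowed (huv : G.Adj u v) (hu : G.degree u = 1) (hv : G.degree v = 2)
    (hvy : G.Adj v y) (hyu : y ≠ u) : g s(u, v) ≠ -g s(v, y) := by
  intro heq
  have hallowed := (hg u v huv).2 (by lia) (by lia)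
  have hne : s(u, v) ≠ s(v, y) := by
    rw [Sym2.eq_swap, ne_eq, Sym2.congr_right]
    exact hyu.symm
  by_cases hy : G.degree y = 3
  · have hlt : edgeRank G s(v, y) < edgeRank G s(u, v) :=
      edgeRank_lt_of_isBranchEdge (isBranchEdge_mk_iff.2 (.inr hy))
        (by rw [isBranchEdge_mk_iff]; lia)
    exact hallowed (heq ▸ .besidePendant hv hvy hyu (.inr ⟨hu, hy⟩) hlt)
  rcases lt_or_gt_of_ne (edgeRank_injective (G := G) |>.ne hne) with hlt | hlt
  · have heq' : g s(y, v) = -g s(v, u) := by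
      rw [Sym2.eq_swap (a := y), Sym2.eq_swap (b := u), heq, neg_neg]
    rw [Sym2.eq_swap (a := u), Sym2.eq_swap (b := y)] at hlt
    exact (hg y v hvy.symm).2 hy (by lia)
      (heq' ▸ .besidePendant hv huv.symm hyu.symm (.inl hu) hlt)
  · have hpendant : IsPendantEdge G s(v, y) :=
      isPendantEdge_of_edgeRank_lt hlt (isPendantEdge_mk_iff.2 (.inl hu))
        (by rw [isBranchEdge_mk_iff]; lia)
    have hy : G.degree y = 1 := (isPendantEdge_mk_iff.1 hpendant).resolve_left (by lia)
    exact hallowed (heq ▸ .besidePendant hv hvy hyu (.inl hy) hlt)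

variable (hτ : ∀ v, τ v ≠ 0)
include hτ

lemma head_ne_head_rev_of_edgeRank_lt (t : Thread G)
    (hlt : edgeRank G t.head < edgeRank G t.rev.head) : g t.head ≠ g t.rev.head := by
  have hfst := t.degree_fst
  have hsnd := t.degree_snd
  by_cases hdst : G.degree t.dst = 3
  · have hsrc : G.degree t.src = 3 := by
      have hbranch : IsBranchEdge G t.head :=
        isBranchEdge_of_edgeRank_lt hlt (isBranchEdge_mk_iff.2 (.inl hdst))
      exact (isBranchEdge_mk_iff.1 hbranch).resolve_right (by lia)
    have hhead : g t.head = if t.IsMuted τ then 0 else τ t.src :=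
      ((hg _ _ t.adj_src_fst).1 hsrc).trans t.branchColor_src_fst
    have hrev : g t.rev.head = if t.rev.IsMuted τ then 0 else τ t.dst :=
      ((hg _ _ t.adj_dst_snd).1 hdst).trans t.rev.branchColor_src_fst
    have hnot : ¬ t.rev.IsMuted τ := fun h => lt_asymm hlt h.2
    have hmuted : t.IsMuted τ ↔ τ t.dst = τ t.src := and_iff_left hlt
    rw [hhead, hrev, if_neg hnot, hmuted]
    split_ifs with heq
    · exact (hτ t.dst).symm
    · exact Ne.symm heq
  · intro heq
    exact (hg _ _ t.adj_dst_snd).2 hdst (by lia) (heq ▸ .thread t.rev rfl rfl hlt)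

lemma head_ne_head_rev_of_isAllowed (t : Thread G) : g t.head ≠ g t.rev.head := by
  rcases lt_or_gt_of_ne (edgeRank_injective (G := G) |>.ne t.head_ne_head_rev) with hlt | hlt
  · exact head_ne_head_rev_of_edgeRank_lt hg hτ t hlt
  · exact (head_ne_head_rev_of_edgeRank_lt hg hτ t.rev hlt).symm

lemma exists_isMuted_of_branch_eq_zero (hux : G.Adj u x) (hu : G.degree u = 3)
    (hzero : g s(u, x) = 0) : ∃ t : Thread G, t.src = u ∧ t.fst = x ∧ t.IsMuted τ :=
  (branchColor_eq_zero_iff (hτ u)).1 ((hg u x hux).1 hu ▸ hzero)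

lemma beside_branch_zero_ne_sign_of_isAllowed (hux : G.Adj u x) (hu : G.degree u = 3)
    (hzero : g s(u, x) = 0) (hxy : G.Adj x y) (hyu : y ≠ u) : g s(x, y) ≠ τ u := by
  obtain ⟨t, rfl, rfl, -⟩ := exists_isMuted_of_branch_eq_zero hg hτ hux hu hzero
  have hfst := t.degree_fst
  have hsnd := t.degree_snd
  obtain rfl : t.snd = y :=
    eq_of_adj_of_degree_eq_two hfst hux.symm t.adj_fst_snd hxy t.src_ne_snd.symm hyu
  intro heq
  rw [Sym2.eq_swap] at heq
  exact (hg _ _ hxy.symm).2 (by lia) (by lia)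
    (heq ▸ .besideBranch hfst hux.symm hyu.symm hu (by lia))

lemma pendant_ne_zero_of_isAllowed (huv : G.Adj u v) (hu : G.degree u = 1) : g s(u, v) ≠ 0 := by
  intro hzero
  rw [Sym2.eq_swap] at hzero
  by_cases hv : G.degree v = 3
  · obtain ⟨t, rfl, rfl, -⟩ := exists_isMuted_of_branch_eq_zero hg hτ huv.symm hv hzero
    have := t.degree_fst
    lia
  · exact (hg v u huv.symm).2 hv (by lia) (hzero ▸ .pendant hu)

lemma isAdmissible_of_isAllowed
    (hmuted : ∀ t t' : Thread G, G.degree t.src ≤ 3 → t.src = t'.src → t.IsMuted τ →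
      t'.IsMuted τ → t = t') :
    IsAdmissible G τ g where
  sign_ne_zero := hτ
  head_ne_head_rev := head_ne_head_rev_of_isAllowed hg hτ
  pendant_ne_zero := pendant_ne_zero_of_isAllowed hg hτ
  pendant_ne_neg := pendant_ne_neg_of_isAllowed hg
  branch_eq_zero_or_eq_sign hux hu := (hg _ _ hux).1 hu ▸ branchColor_eq_zero_or_eq G τ _ _
  branch_zero_unique hux huy hu hx hy := by
    obtain ⟨t, rfl, rfl, ht⟩ := exists_isMuted_of_branch_eq_zero hg hτ hux hu hx
    obtain ⟨t', hsrc, rfl, ht'⟩ := exists_isMuted_of_branch_eq_zero hg hτ huy hu hy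
    rw [hmuted t t' hu.le hsrc.symm ht ht']
  beside_branch_zero_ne_sign := beside_branch_zero_ne_sign_of_isAllowed hg hτ

end AllowedAdmissible

theorem lir_two_mul_subcubic_indep_pendant_general {V : Type*} [Fintype V] [DecidableEq V]
    (G : SimpleGraph V) (hsub : ∀ v : V, G.degree v ≤ 3)
    (hindep : ∀ u v : V, G.degree u = 3 → G.degree v = 3 → ¬ G.Adj u v)
    (hpendant : ∀ u v : V, G.Adj u v → G.degree u = 1 → G.degree v ≠ 1) :
    ∃ r : Sym2 V → ℕ, IsLIR2 G r ∧
      ∀ u v : V, G.Adj u v → G.degree u = 1 → r s(u, v) ≠ 1 := by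
  obtain ⟨τ, hτ, hmuted⟩ := exists_sign_forall_eq_of_isMuted G
  obtain ⟨g, hg⟩ := exists_forall_isAllowed hindep τ
  have h : IsAdmissible G τ g := isAdmissible_of_isAllowed hg hτ hmuted
  refine ⟨redCopies g, isLIR2_redCopies fun u v huv => ?_, fun u v huv hu => ?_⟩
  · exact h.isIrregularEdge hsub hindep hpendant huv
  · rw [ne_eq, redCopies_eq_one_iff]
    exact h.pendant_ne_zero huv hu

/-- If `G` is a connected subcubic simple graph not isomorphic to `K₂` in
which the vertices of degree 3 form an independent set, then `²G` admits a
locally irregular 2-edge-coloring `r` such that for every pendant edge `uv`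
(with `u` of degree 1) colored red-blue (`r s(u,v) = 1`), it is not the case
that the other end `v` has red degree 3 and blue degree 3. -/
theorem lir_two_mul_subcubic_indep_pendant {V : Type*} [Fintype V] [DecidableEq V]
    (G : SimpleGraph V) (hconn : G.Connected)
    (hsub : ∀ v : V, G.degree v ≤ 3)
    (hindep : ∀ u v : V, G.degree u = 3 → G.degree v = 3 → ¬ G.Adj u v)
    (hK2 : ¬ Nonempty (G ≃g (⊤ : SimpleGraph (Fin 2)))) :
    ∃ r : Sym2 V → ℕ, IsLIR2 G r ∧
      ∀ u v : V, G.Adj u v → G.degree u = 1 → r s(u, v) = 1 →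
        ¬ (redDeg G r v = 3 ∧ blueDeg G r v = 3) := by
  obtain ⟨r, hr, hne⟩ := lir_two_mul_subcubic_indep_pendant_general G hsub hindep
    fun u v huv hu hv => hK2 (nonempty_iso_top_fin_two hconn huv hu hv)
  exact ⟨r, hr, fun u v huv hu h1 => absurd h1 (hne u v huv hu)⟩
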